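/- Let E/k be a Galois field extension of degree 4 with Gal(E/k) ≅ ℤ/2ℤ × ℤ/2ℤ and let K be an intermediate field with [K:k] = 2. Then for every β ∈ Kˣ there exists a finite separable field extension F/k such that (i) the image β ⊗ 1 of β in (K ⊗_k F)ˣ is a norm from (E ⊗_k F)ˣ, and (ii) for every finite separable field extension F'/k such that the image of β in (K ⊗_k F')ˣ is a norm from (E ⊗_k F')ˣ, the degree [F:k] divides [F':k]. -/

import Mathlib

open TensorProduct

/-- `β ∈ Kˣ` becomes a norm from `(E ⊗[k] F)ˣ` to `(K ⊗[k] F)ˣ`, where `E ⊗[k] F` is a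
`(K ⊗[k] F)`-algebra via the map induced by the inclusion `K ⊆ E`. -/
def IsNormFrom (k K E F : Type) [Field k] [Field K] [Field E] [Field F]
    [Algebra k K] [Algebra k E] [Algebra K E] [IsScalarTower k K E] [Algebra k F]
    (β : K) : Prop :=
  letI : Algebra (K ⊗[k] F) (E ⊗[k] F) :=
    ((Algebra.TensorProduct.map (IsScalarTower.toAlgHom k K E) (AlgHom.id k F)).toRingHom).toAlgebra
  ∃ x : (E ⊗[k] F)ˣ,
    Algebra.norm (K ⊗[k] F) (x : E ⊗[k] F) = (β : K) ⊗ₜ[k] (1 : F)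

section TensorMap

variable (k K E F : Type) [Field k] [Field K] [Field E] [Field F]
  [Algebra k K] [Algebra k E] [Algebra K E] [IsScalarTower k K E] [Algebra k F]

/-- The `(K ⊗[k] F)`-algebra structure on `E ⊗[k] F` induced by the inclusion `K ⊆ E`. -/
noncomputable abbrev tensorMapAlgebra : Algebra (K ⊗[k] F) (E ⊗[k] F) :=
  ((Algebra.TensorProduct.map (IsScalarTower.toAlgHom k K E) (AlgHom.id k F)).toRingHom).toAlgebra

attribute [local instance] tensorMapAlgebra

theorem tensorMapAlgebra_algebraMap_tmul (x : K) (y : F) :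
    algebraMap (K ⊗[k] F) (E ⊗[k] F) (x ⊗ₜ y) = algebraMap K E x ⊗ₜ y := by
  simp [RingHom.algebraMap_toAlgebra]

theorem tensorMapAlgebra_isScalarTower : IsScalarTower K (K ⊗[k] F) (E ⊗[k] F) :=
  .of_algebraMap_eq fun x => by
    rw [Algebra.TensorProduct.algebraMap_apply, Algebra.TensorProduct.algebraMap_apply,
      tensorMapAlgebra_algebraMap_tmul]
    rfl

attribute [local instance] tensorMapAlgebra_isScalarTower

theorem tensorMapAlgebra_isPushout : Algebra.IsPushout K (K ⊗[k] F) E (E ⊗[k] F) :=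
  (Algebra.IsPushout.tensorProduct_tensorProduct k F K E
    (by ext y; simp [tensorMapAlgebra_algebraMap_tmul])).symm

/-- If `β` becomes a norm over `F`, then `β ^ [F : k]` is a norm from `E`. -/
theorem IsNormFrom.exists_norm_eq_pow_finrank {β : K} (h : IsNormFrom k K E F β) :
    ∃ y : E, Algebra.norm K y = β ^ Module.finrank k F := by
  obtain ⟨x, hx⟩ := h
  have : Module.Free (K ⊗[k] F) (E ⊗[k] F) := (tensorMapAlgebra_isPushout k K E F).out.free
  refine ⟨Algebra.norm E (x : E ⊗[k] F), ?_⟩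
  rw [Algebra.norm_norm, ← Algebra.norm_norm (R := K) (S := K ⊗[k] F), hx,
    ← Module.finrank_baseChange (R := K), ← Algebra.norm_algebraMap]
  rfl

/-- A norm from `E` to `K` is a norm after the trivial base change. -/
theorem isNormFrom_self_of_norm_eq [FiniteDimensional K E] {β : K} (hβ : β ≠ 0)
    {y : E} (hy : Algebra.norm K y = β) : IsNormFrom k K E k β := by
  have hy0 : y ≠ 0 := Algebra.norm_ne_zero_iff.mp (hy ▸ hβ)
  refine ⟨(Units.mk0 y hy0).map (Algebra.TensorProduct.includeLeft : E →ₐ[k] E ⊗[k] k), ?_⟩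
  rw [Algebra.norm_eq_of_equiv_equiv (Algebra.TensorProduct.rid k k K).toRingEquiv
    (Algebra.TensorProduct.rid k k E).toRingEquiv]
  · simp [hy]
  · ext x <;> simp [tensorMapAlgebra_algebraMap_tmul, Algebra.smul_def,
      ← IsScalarTower.algebraMap_apply]

end TensorMap

section Quadratic

variable {A B : Type*} [CommRing A] [CommRing B] [Algebra A B]

/-- The norm form of a quadratic algebra with basis `1, θ`. -/
theorem Algebra.norm_add_smul_of_basis_fin_two (b : Module.Basis (Fin 2) A B) {θ : B} {a c : A}
    (h0 : b 0 = 1) (h1 : b 1 = θ) (hθ : θ * θ = -(a • θ) - c • 1) (u v : A) :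
    Algebra.norm A (u • 1 + v • θ) = u ^ 2 - a * u * v + c * v ^ 2 := by
  have h11 : (u • 1 + v • θ) * b 0 = u • b 0 + v • b 1 := by rw [h0, h1, mul_one]
  have h12 : (u • 1 + v • θ) * b 1 = (-(c * v)) • b 0 + (u - a * v) • b 1 := by
    rw [h0, h1, add_mul, smul_mul_assoc, smul_mul_assoc, one_mul, hθ]
    module
  rw [Algebra.norm_eq_matrix_det b, Matrix.det_fin_two]
  simp only [Algebra.leftMulMatrix_eq_repr_mul, h11, h12]
  simp
  ring

/-- The norm form of a quadratic algebra is the product of an element with its conjugate. -/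
theorem add_smul_mul_conj {θ : B} {a c : A} (hθ : θ * θ = -(a • θ) - c • 1) (u v : A) :
    (u • 1 + v • θ) * ((u - a * v) • 1 - v • θ) = (u ^ 2 - a * u * v + c * v ^ 2) • (1 : B) := by
  simp only [Algebra.smul_def, map_add, map_sub, map_mul, map_pow, mul_one] at hθ ⊢
  linear_combination -(algebraMap A B v) ^ 2 * hθ

end Quadratic

section Splitting

variable {k K E : Type} [Field k] [Field K] [Field E]
  [Algebra k K] [Algebra k E] [Algebra K E] [IsScalarTower k K E]

attribute [local instance] tensorMapAlgebra tensorMapAlgebra_isScalarTower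

/-- If `E = K(θ)` is quadratic over `K` and `θ` lies in a quadratic separable subextension `L / k`,
then every element of `Kˣ` becomes a norm over `L`. -/
theorem isNormFrom_of_quadratic (L : Type) [Field L] [Algebra k L] [Algebra L E]
    [IsScalarTower k L E] [Algebra.IsSeparable k L]
    (hL : Module.finrank k L = 2) (hE : Module.finrank K E = 2) (θ : L)
    (hθ : algebraMap L E θ ∉ (algebraMap K E).range) {β : K} (hβ : β ≠ 0) :
    IsNormFrom k K E L β := by
  have : FiniteDimensional k L := .of_finrank_pos (by omega)
  have hint : IsIntegral k θ := .of_finite k θ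
  have hdeg : (minpoly k θ).natDegree = 2 := by
    refine le_antisymm (Nat.le_of_dvd two_pos (hL ▸ minpoly.degree_dvd hint)) ?_
    rw [minpoly.two_le_natDegree_iff hint]
    rintro ⟨x, rfl⟩
    refine hθ ⟨algebraMap k K x, ?_⟩
    rw [← IsScalarTower.algebraMap_apply, ← IsScalarTower.algebraMap_apply]
  obtain ⟨a, c, hp⟩ : ∃ a c : k, minpoly k θ =
      Polynomial.X ^ 2 + Polynomial.C a * Polynomial.X + Polynomial.C c := by
    refine ⟨(minpoly k θ).coeff 1, (minpoly k θ).coeff 0, ?_⟩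
    conv_lhs => rw [(minpoly.monic hint).as_sum, hdeg]
    simp [Finset.sum_range_succ]
    ring
  have hroot : θ ^ 2 + algebraMap k L a * θ + algebraMap k L c = 0 := by
    simpa [hp] using minpoly.aeval k θ
  have hder : 2 * θ + algebraMap k L a ≠ 0 := by
    have := (Algebra.IsSeparable.isSeparable k θ).aeval_derivative_ne_zero (minpoly.aeval k θ)
    simpa [hp, map_ofNat, one_add_one_eq_two] using this
  have hli : LinearIndependent K ![1, algebraMap L E θ] := by
    rw [LinearIndependent.pair_iff' one_ne_zero]
    intro x hx
    exact hθ ⟨x, by rw [← hx, Algebra.smul_def, mul_one]⟩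
  let b := basisOfLinearIndependentOfCardEqFinrank hli (by simp [hE])
  let b' := (tensorMapAlgebra_isPushout k K E L).out.basis b
  have h0 : b' 0 = 1 := by
    simp [b', b, IsBaseChange.basis_apply, Algebra.TensorProduct.one_def]
  have h1 : b' 1 = algebraMap L E θ ⊗ₜ 1 := by
    simp [b', b, IsBaseChange.basis_apply]
  have hsmul : ∀ (r : k) (z : E ⊗[k] L), algebraMap k (K ⊗[k] L) r • z = r • z := by
    intro r z
    rw [Algebra.smul_def, Algebra.smul_def, Algebra.TensorProduct.algebraMap_apply,
      tensorMapAlgebra_algebraMap_tmul, ← IsScalarTower.algebraMap_apply]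
    rfl
  have hsq : (algebraMap L E θ ⊗ₜ[k] (1 : L)) * (algebraMap L E θ ⊗ₜ 1) =
      -(algebraMap k (K ⊗[k] L) a • (algebraMap L E θ ⊗ₜ 1)) - algebraMap k (K ⊗[k] L) c • 1 := by
    have hrootE : algebraMap L E θ * algebraMap L E θ = -(a • algebraMap L E θ) - c • 1 := by
      have := congrArg (algebraMap L E) hroot
      simp only [map_add, map_mul, map_pow, map_zero, ← IsScalarTower.algebraMap_apply] at this
      simp only [Algebra.smul_def]
      linear_combination this
    rw [hsmul, hsmul, Algebra.TensorProduct.tmul_mul_tmul, hrootE, one_mul,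
      TensorProduct.sub_tmul, TensorProduct.neg_tmul, TensorProduct.smul_tmul',
      Algebra.TensorProduct.one_def, TensorProduct.smul_tmul']
  set t : K ⊗[k] L := 1 ⊗ₜ θ
  set w : K ⊗[k] L := 1 ⊗ₜ (2 * θ + algebraMap k L a)⁻¹ with hw
  set β' : K ⊗[k] L := β ⊗ₜ 1
  have hwt : w * (2 * t + algebraMap k (K ⊗[k] L) a) = 1 := by
    have : 2 * t + algebraMap k (K ⊗[k] L) a =
        Algebra.TensorProduct.includeRight (2 * θ + algebraMap k L a) := by
      rw [map_add, map_mul, map_ofNat, AlgHom.commutes, Algebra.TensorProduct.includeRight_apply]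
    rw [this, hw, Algebra.TensorProduct.includeRight_apply, Algebra.TensorProduct.tmul_mul_tmul,
      inv_mul_cancel₀ hder, one_mul, Algebra.TensorProduct.one_def]
  have ht2 : t ^ 2 + algebraMap k (K ⊗[k] L) a * t + algebraMap k (K ⊗[k] L) c = 0 := by
    have := congrArg (Algebra.TensorProduct.includeRight : L →ₐ[k] K ⊗[k] L) hroot
    rwa [map_add, map_add, map_mul, map_pow, AlgHom.commutes, AlgHom.commutes, map_zero,
      Algebra.TensorProduct.includeRight_apply] at this
  set v := (β' - 1) * w
  set u := β' - v * t
  have hnorm := Algebra.norm_add_smul_of_basis_fin_two b' h0 h1 hsq u v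
  have hval : u ^ 2 - algebraMap k (K ⊗[k] L) a * u * v + algebraMap k (K ⊗[k] L) c * v ^ 2
      = β' := by
    linear_combination v ^ 2 * ht2 - β' * (β' - 1) * hwt
  have hunit : IsUnit (u • 1 + v • (algebraMap L E θ ⊗ₜ[k] (1 : L))) := by
    have hβu : IsUnit β' := (isUnit_iff_ne_zero.mpr hβ).map
      (Algebra.TensorProduct.includeLeft : K →ₐ[k] K ⊗[k] L)
    refine isUnit_of_mul_isUnit_left (y := (u - algebraMap k (K ⊗[k] L) a * v) • 1 -
      v • (algebraMap L E θ ⊗ₜ[k] (1 : L))) ?_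
    rw [add_smul_mul_conj hsq, hval, ← Algebra.algebraMap_eq_smul_one]
    exact hβu.map _
  exact ⟨hunit.unit, hnorm.trans hval⟩

end Splitting

section Galois

variable {k E : Type*} [Field k] [Field E] [Algebra k E]

/-- In a biquadratic extension every quadratic subextension has another quadratic subextension
not contained in it. -/
theorem exists_quadratic_not_le [IsGalois k E] (hdeg : Module.finrank k E = 4)
    (hsq : ∀ τ : E ≃ₐ[k] E, τ ^ 2 = 1) (M : IntermediateField k E) (hM : Module.finrank k M = 2) :
    ∃ L : IntermediateField k E, Module.finrank k L = 2 ∧ ¬ L ≤ M := by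
  have : FiniteDimensional k E := .of_finrank_pos (by omega)
  obtain ⟨x, hxM, hx⟩ : ∃ x ∈ M, x ∉ (⊥ : IntermediateField k E) := by
    by_contra! h
    have : M = ⊥ := le_bot_iff.mp h
    rw [this, IntermediateField.finrank_bot] at hM
    omega
  rw [IsGalois.mem_bot_iff_fixed] at hx
  push Not at hx
  obtain ⟨τ, hτ⟩ := hx
  have hord : orderOf τ = 2 := orderOf_eq_prime (hsq τ) (by rintro rfl; exact hτ rfl)
  let L := IntermediateField.fixedField (Subgroup.zpowers τ)
  have hL : Module.finrank k L = 2 := by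
    have h1 := IntermediateField.finrank_fixedField_eq_card (Subgroup.zpowers τ)
    rw [Nat.card_zpowers, hord] at h1
    have h2 := Module.finrank_mul_finrank k L E
    rw [h1] at h2
    omega
  refine ⟨L, hL, fun hle => hτ ?_⟩
  have hx : x ∈ L := by rwa [IntermediateField.eq_of_le_of_finrank_eq hle (hL.trans hM.symm)]
  exact (IntermediateField.mem_fixedField_iff _ x).mp hx τ (Subgroup.mem_zpowers τ)

end Galois

theorem stmt7 (k K E : Type) [Field k] [Field K] [Field E]
    [Algebra k K] [Algebra k E] [Algebra K E] [IsScalarTower k K E]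
    [IsGalois k E] (hdeg : Module.finrank k E = 4)
    (hgal : Nonempty ((E ≃ₐ[k] E) ≃* Multiplicative (ZMod 2 × ZMod 2)))
    (hK : Module.finrank k K = 2)
    (β : Kˣ) :
    ∃ (F : Type) (_ : Field F) (_ : Algebra k F),
      FiniteDimensional k F ∧ Algebra.IsSeparable k F ∧
      IsNormFrom k K E F (β : K) ∧
      ∀ (F' : Type) (_ : Field F') (_ : Algebra k F'),
        FiniteDimensional k F' → Algebra.IsSeparable k F' →
        IsNormFrom k K E F' (β : K) →
        Module.finrank k F ∣ Module.finrank k F' := by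
  have hβ : (β : K) ≠ 0 := β.ne_zero
  have hKE : Module.finrank K E = 2 := by
    have := Module.finrank_mul_finrank k K E
    rw [hK] at this
    omega
  have : FiniteDimensional K E := .of_finrank_pos (by omega)
  by_cases hodd : ∃ (F' : Type) (_ : Field F') (_ : Algebra k F'),
      IsNormFrom k K E F' (β : K) ∧ Odd (Module.finrank k F')
  · obtain ⟨F', _, _, hF', m, hm⟩ := hodd
    obtain ⟨y, hy⟩ := hF'.exists_norm_eq_pow_finrank
    refine ⟨k, inferInstance, inferInstance, inferInstance, inferInstance, ?_, ?_⟩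
    · refine isNormFrom_self_of_norm_eq k K E hβ
        (y := y * algebraMap K E ((β : K) ^ m)⁻¹) ?_
      rw [map_mul, hy, Algebra.norm_algebraMap, hKE, hm]
      field_simp
      ring
    · intro F'' _ _ _ _ _
      rw [Module.finrank_self]
      exact one_dvd _
  · have hsq (τ : E ≃ₐ[k] E) : τ ^ 2 = 1 := by
      obtain ⟨e⟩ := hgal
      apply e.injective
      rw [map_pow, map_one]
      generalize e τ = g
      revert g
      decide
    obtain ⟨L, hL, hLK⟩ := exists_quadratic_not_le hdeg hsq
      (IsScalarTower.toAlgHom k K E).fieldRange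
      ((LinearEquiv.finrank_eq
        (AlgEquiv.ofInjectiveField (IsScalarTower.toAlgHom k K E)).toLinearEquiv).symm.trans hK)
    obtain ⟨θ, hθL, hθ⟩ := SetLike.not_le_iff_exists.mp hLK
    refine ⟨L, inferInstance, inferInstance, .of_finrank_pos (by omega), inferInstance,
      isNormFrom_of_quadratic L hL hKE ⟨θ, hθL⟩ hθ hβ, fun F' _ _ _ _ hF' => ?_⟩
    rw [hL, ← even_iff_two_dvd, ← Nat.not_odd_iff_even]
    exact fun h => hodd ⟨F', _, _, hF', h⟩
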